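/- Let m, m' ≥ 2 and n = m·m'. Then 3 · |{ c ∈ C : wt(c) = 2^{n−2} }| = 2 · |{ A : A is a 2×n matrix over ZMod 2 with rank(A) = 2 and rank(A_i) ≤ 1 for every i ∈ {1,…,m} }|. -/

import Mathlib

/-- Monomial evaluation: `mon_S(α) = ∏_{i ∈ S} α i`. -/
def mon {n : ℕ} (S : Finset (Fin n)) : (Fin n → ZMod 2) → ZMod 2 :=
  fun x => ∏ i ∈ S, x i

/-- The Reed–Muller code `RM(r, n)` : span of the monomials of degree at most `r`. -/
def RMcode (r n : ℕ) : Submodule (ZMod 2) ((Fin n → ZMod 2) → ZMod 2) :=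
  Submodule.span (ZMod 2) {c | ∃ S : Finset (Fin n), S.card ≤ r ∧ c = mon S}

/-- The second-order recursive subproduct code `C = RM(1,m')^{⊗[2,m]}` of length `2^{m·m'}`:
span of the monomials `mon_S` with `|S| ≤ 2` and `|S ∩ Bᵢ| ≤ 1` for every block
`Bᵢ = {(i−1)·m', …, i·m'−1}` (an index `i : Fin (m·m')` lies in block `(i : ℕ) / m'`). -/
def Ccode (m m' : ℕ) : Submodule (ZMod 2) ((Fin (m * m') → ZMod 2) → ZMod 2) :=
  Submodule.span (ZMod 2) {c | ∃ S : Finset (Fin (m * m')),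
    S.card ≤ 2 ∧ (∀ b : ℕ, (S.filter fun i : Fin (m * m') => (i : ℕ) / m' = b).card ≤ 1) ∧ c = mon S}

/-- Hamming weight: the number of evaluation points where `c` takes the value `1`. -/
def wt {n : ℕ} (c : (Fin n → ZMod 2) → ZMod 2) : ℕ :=
  (Finset.univ.filter fun x => c x = 1).card

/-- The `2 × m'` submatrix `A_b` of a `2 × (m·m')` matrix `A`, formed by the columns
indexed by block `B_b` (the indices `i` with `(i : ℕ) / m' = b`). -/
def blockMat (m m' : ℕ) (A : Matrix (Fin 2) (Fin (m * m')) (ZMod 2)) (b : ℕ) :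
    Matrix (Fin 2) {i : Fin (m * m') // (i : ℕ) / m' = b} (ZMod 2) :=
  A.submatrix id Subtype.val

/-!
The codewords of weight `2 ^ (n - 2)` are minimum-weight words of `RM(2, n)`, and they are the
indicators of the flats `{x | A *ᵥ x = b}` of codimension two. Indeed, by the minimum distance of
`RM(3, n)`, a hyperplane meets the support of such a word `c` in nothing, in everything, or in
exactly half of it. So the character sum of a linear form over the support is `± wt c` if the form
is constant on the support and `0` otherwise, and by Parseval's identity exactly four linear forms
are constant. Hence `c` is the indicator of a flat for exactly `3 * 2 = 6` matrices `A` of rank two,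
the ordered pairs of distinct nonzero such forms, while every `A` of rank two gives four flats.

A word of degree two lies in the subproduct code iff its mixed second differences along two
variables of the same block vanish. For the indicator of `{x | A *ᵥ x = b}` these differences are
the `2 × 2` minors of `A`, so the condition says that every block of `A` has rank at most one.
Counting the pairs `(A, c)` in two ways gives the identity.
-/

open Finset Matrix
open scoped fwdDiff

section ZModTwo

variable {a b : ZMod 2}

lemma zmod_two_eq_zero_or_eq_one (a : ZMod 2) : a = 0 ∨ a = 1 := by
  decide +revert

lemma zmod_two_ne_zero_iff_eq_one : a ≠ 0 ↔ a = 1 := by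
  decide +revert

lemma zmod_two_eq_iff_eq_one_iff : a = b ↔ (a = 1 ↔ b = 1) := by
  decide +revert

end ZModTwo

section ReedMuller

variable {n r s : ℕ} {f g : (Fin n → ZMod 2) → ZMod 2}

lemma mon_apply_eq_one_iff {S : Finset (Fin n)} {x : Fin n → ZMod 2} :
    mon S x = 1 ↔ ∀ i ∈ S, x i = 1 := by
  simp only [mon, ← zmod_two_ne_zero_iff_eq_one, Finset.prod_ne_zero_iff]

lemma mon_empty : mon (∅ : Finset (Fin n)) = 1 := rfl

lemma mon_mul_mon (S T : Finset (Fin n)) : mon S * mon T = mon (S ∪ T) := by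
  have mul_eq_one_iff (a b : ZMod 2) : a * b = 1 ↔ a = 1 ∧ b = 1 := by decide +revert
  ext x
  rw [zmod_two_eq_iff_eq_one_iff, Pi.mul_apply, mul_eq_one_iff]
  simp only [mon_apply_eq_one_iff, mem_union, or_imp, forall_and]

lemma mon_mem_RMcode {S : Finset (Fin n)} (hS : #S ≤ r) : mon S ∈ RMcode r n :=
  Submodule.subset_span ⟨S, hS, rfl⟩

lemma mul_mem_RMcode (hf : f ∈ RMcode r n) (hg : g ∈ RMcode s n) : f * g ∈ RMcode (r + s) n := by
  refine Submodule.mul_le.mp (?_ : RMcode r n * RMcode s n ≤ _) f hf g hg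
  rw [RMcode, RMcode, Submodule.span_mul_span, Submodule.span_le]
  rintro _ ⟨_, ⟨S, hS, rfl⟩, _, ⟨T, hT, rfl⟩, rfl⟩
  change mon S * mon T ∈ _
  rw [mon_mul_mon]
  exact mon_mem_RMcode ((card_union_le S T).trans (add_le_add hS hT))

lemma prod_mem_RMcode {κ : Type*} {s : Finset κ} {f : κ → (Fin n → ZMod 2) → ZMod 2}
    (hf : ∀ k ∈ s, f k ∈ RMcode 1 n) : ∏ k ∈ s, f k ∈ RMcode #s n := by
  classical
  induction s using Finset.induction_on with
  | empty => exact mon_mem_RMcode (S := ∅) le_rfl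
  | insert k s hk ih =>
    rw [prod_insert hk, card_insert_of_notMem hk, add_comm]
    rw [forall_mem_insert] at hf
    exact mul_mem_RMcode hf.1 (ih hf.2)

lemma dotProduct_add_const_mem_RMcode (u : Fin n → ZMod 2) (a : ZMod 2) :
    (fun x ↦ u ⬝ᵥ x + a) ∈ RMcode 1 n := by
  have expand : (fun x ↦ u ⬝ᵥ x + a) = ∑ i, u i • mon {i} + a • mon ∅ := by
    ext x
    simp [mon, dotProduct]
  rw [expand]
  exact add_mem (sum_mem fun i _ ↦ Submodule.smul_mem _ _ (mon_mem_RMcode (by simp)))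
    (Submodule.smul_mem _ _ (mon_mem_RMcode (by simp)))

lemma fwdDiff_mon (S : Finset (Fin n)) (a : Fin n → ZMod 2) :
    Δ_[a] (mon S) = ∑ T ∈ S.ssubsets, (∏ i ∈ S \ T, a i) • mon T := by
  ext x
  simp only [fwdDiff, mon, Pi.add_apply, prod_add, Finset.sum_apply, Pi.smul_apply, smul_eq_mul]
  rw [ssubsets, ← add_sum_erase _ _ (mem_powerset_self S)]
  simp [mul_comm]

lemma fwdDiff_zero {M G : Type*} [AddCommMonoid M] [AddCommGroup G] (h : M) :
    Δ_[h] (0 : M → G) = 0 :=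
  fwdDiff_const h 0

lemma fwdDiff_mem_RMcode (hf : f ∈ RMcode (r + 1) n) (a : Fin n → ZMod 2) :
    Δ_[a] f ∈ RMcode r n := by
  induction hf using Submodule.span_induction with
  | mem _ hmon =>
    obtain ⟨S, hS, rfl⟩ := hmon
    rw [fwdDiff_mon]
    refine sum_mem fun T hT ↦ Submodule.smul_mem _ _ (mon_mem_RMcode ?_)
    have := card_lt_card (mem_ssubsets.mp hT)
    omega
  | zero =>
    rw [fwdDiff_zero]
    exact zero_mem _
  | add f g _ _ hf hg => simpa only [fwdDiff_add] using add_mem hf hg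
  | smul c f _ hf => simpa only [fwdDiff_const_smul] using Submodule.smul_mem _ c hf

lemma RMcode_zero : RMcode 0 n = Submodule.span (ZMod 2) {1} := by
  simp [RMcode, mon_empty]

lemma wt_eq_hammingNorm (f : (Fin n → ZMod 2) → ZMod 2) : wt f = hammingNorm f := by
  simp only [wt, hammingNorm, zmod_two_ne_zero_iff_eq_one]

lemma wt_one : wt (1 : (Fin n → ZMod 2) → ZMod 2) = 2 ^ n := by
  simp [wt]

lemma wt_fwdDiff_le (f : (Fin n → ZMod 2) → ZMod 2) (a : Fin n → ZMod 2) :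
    wt (Δ_[a] f) ≤ 2 * wt f := by
  have translate : wt (fun x ↦ f (x + a)) = wt f :=
    card_equiv (Equiv.addRight a) (by simp)
  calc wt (Δ_[a] f) = hammingDist f (fun x ↦ f (x + a)) := by
        rw [hammingDist_eq_hammingNorm, ← sub_eq_neg_add, ← wt_eq_hammingNorm]
        rfl
    _ ≤ hammingDist f 0 + hammingDist 0 (fun x ↦ f (x + a)) := hammingDist_triangle ..
    _ = 2 * wt f := by
        rw [hammingDist_zero_right, hammingDist_zero_left, ← wt_eq_hammingNorm,
          ← wt_eq_hammingNorm, translate, two_mul]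

lemma eq_zero_or_eq_one_of_forall_fwdDiff_eq_zero (hf : ∀ a, Δ_[a] f = 0) : f = 0 ∨ f = 1 := by
  have const (x : Fin n → ZMod 2) : f x = f 0 := by
    simpa [fwdDiff, sub_eq_zero] using congrFun (hf x) 0
  exact (zmod_two_eq_zero_or_eq_one (f 0)).imp (fun h ↦ funext fun x ↦ (const x).trans h)
    (fun h ↦ funext fun x ↦ (const x).trans h)

theorem two_pow_le_two_pow_mul_wt_of_mem_RMcode (hf : f ∈ RMcode r n) (hf0 : f ≠ 0) :
    2 ^ n ≤ 2 ^ r * wt f := by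
  have of_const {k : ℕ} {g : (Fin n → ZMod 2) → ZMod 2} (hg : ∀ a, Δ_[a] g = 0) (hg0 : g ≠ 0) :
      2 ^ n ≤ 2 ^ k * wt g := by
    rw [(eq_zero_or_eq_one_of_forall_fwdDiff_eq_zero hg).resolve_left hg0, wt_one]
    exact Nat.le_mul_of_pos_left _ (by positivity)
  induction r generalizing f with
  | zero =>
    rw [RMcode_zero, Submodule.mem_span_singleton] at hf
    obtain ⟨c, rfl⟩ := hf
    exact of_const (fun a ↦ by ext; simp [fwdDiff]) hf0
  | succ r ih =>
    by_cases hconst : ∀ a, Δ_[a] f = 0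
    · exact of_const hconst hf0
    obtain ⟨a, ha⟩ := not_forall.mp hconst
    calc 2 ^ n ≤ 2 ^ r * wt (Δ_[a] f) := ih (fwdDiff_mem_RMcode hf a) ha
      _ ≤ 2 ^ r * (2 * wt f) := Nat.mul_le_mul_left _ (wt_fwdDiff_le f a)
      _ = 2 ^ (r + 1) * wt f := by ring

lemma fwdDiff_single_mon (i : Fin n) (S : Finset (Fin n)) :
    Δ_[Pi.single i 1] (mon S) = if i ∈ S then mon (S.erase i) else 0 := by
  have shift_eq {T : Finset (Fin n)} (hi : i ∉ T) (x : Fin n → ZMod 2) :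
      mon T (x + Pi.single i 1) = mon T x := by
    refine prod_congr rfl fun j hj ↦ ?_
    rw [Pi.add_apply, Pi.single_eq_of_ne (ne_of_mem_of_not_mem hj hi), add_zero]
  ext x
  split_ifs with hi
  · have split (y : Fin n → ZMod 2) : mon S y = y i * mon (S.erase i) y :=
      (mul_prod_erase S y hi).symm
    rw [fwdDiff, split, split, shift_eq (notMem_erase i S), Pi.add_apply, Pi.single_eq_same]
    ring
  · rw [fwdDiff, shift_eq hi, sub_self, Pi.zero_apply]

lemma fwdDiff_single_fwdDiff_single_mon {i j : Fin n} (hij : i ≠ j) (S : Finset (Fin n)) :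
    Δ_[Pi.single i 1] (Δ_[Pi.single j 1] (mon S)) =
      if i ∈ S ∧ j ∈ S then mon ((S.erase j).erase i) else 0 := by
  rw [fwdDiff_single_mon]
  by_cases hj : j ∈ S
  · simp only [hj, if_true, fwdDiff_single_mon, mem_erase, hij, ne_eq, not_false_eq_true, true_and,
      and_true]
  · simp only [hj, if_false, fwdDiff_zero, and_false]

lemma exists_eq_sum_smul_mon (hf : f ∈ RMcode r n) :
    ∃ a : Finset (Fin n) → ZMod 2, f = ∑ S with #S ≤ r, a S • mon S := by
  have generators_eq : {c | ∃ S : Finset (Fin n), #S ≤ r ∧ c = mon S} =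
      mon '' ({S | #S ≤ r} : Finset (Finset (Fin n))) := by
    ext
    simp only [coe_filter, mem_univ, true_and, Set.mem_image, Set.mem_ofPred_eq, eq_comm]
  rw [RMcode, generators_eq, Submodule.mem_span_image_finset_iff_exists_fun'] at hf
  exact hf.imp fun _ ↦ Eq.symm

lemma mem_and_mem_iff_eq_pair {α : Type*} [DecidableEq α] {i j : α} (hij : i ≠ j)
    {S : Finset α} (hS : #S ≤ 2) : i ∈ S ∧ j ∈ S ↔ S = {i, j} := by
  refine ⟨fun ⟨hi, hj⟩ ↦ (eq_of_subset_of_card_le ?_ ?_).symm, fun h ↦ by simp [h]⟩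
  · exact insert_subset hi (singleton_subset_iff.mpr hj)
  · rwa [card_pair hij]

lemma fwdDiff_single_fwdDiff_single_sum {i j : Fin n} (hij : i ≠ j)
    (a : Finset (Fin n) → ZMod 2) :
    Δ_[Pi.single i 1] (Δ_[Pi.single j 1] (∑ S with #S ≤ 2, a S • mon S)) =
      fun _ ↦ a {i, j} := by
  have mixed_eq_ite {S : Finset (Fin n)} (hS : #S ≤ 2) :
      Δ_[Pi.single i 1] (Δ_[Pi.single j 1] (mon S)) = if S = {i, j} then 1 else 0 := by
    have pair_erase : (({i, j} : Finset (Fin n)).erase j).erase i = ∅ := by grind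
    simp only [fwdDiff_single_fwdDiff_single_mon hij, mem_and_mem_iff_eq_pair hij hS]
    exact if_ctx_congr Iff.rfl (fun hS ↦ by rw [hS, pair_erase, mon_empty]) fun _ ↦ rfl
  calc Δ_[Pi.single i 1] (Δ_[Pi.single j 1] (∑ S with #S ≤ 2, a S • mon S))
      = ∑ S with #S ≤ 2, a S • Δ_[Pi.single i 1] (Δ_[Pi.single j 1] (mon S)) := by
        simp only [fwdDiff_finsetSum, fwdDiff_const_smul]
    _ = ∑ S with #S ≤ 2, a S • if S = {i, j} then 1 else 0 :=
        sum_congr rfl fun S hS ↦ by rw [mixed_eq_ite (mem_filter_univ S |>.mp hS)]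
    _ = fun _ ↦ a {i, j} := by
        simp only [smul_ite, smul_zero, sum_ite_eq', mem_filter_univ, card_le_two, if_true]
        ext
        simp

end ReedMuller

section Fourier

variable {ι : Type*} [Fintype ι]

/-- The nontrivial character `a ↦ (-1) ^ a` of `ZMod 2`, with integer values. -/
def signChar : AddChar (ZMod 2) ℤ :=
  AddChar.zmodChar 2 (by norm_num : (-1 : ℤ) ^ 2 = 1)

lemma signChar_eq_one_iff {a : ZMod 2} : signChar a = 1 ↔ a = 0 := by
  decide +revert

lemma signChar_eq_ite (a : ZMod 2) :
    signChar a = (if a = 0 then 1 else 0) - (if a = 1 then 1 else 0) := by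
  decide +revert

lemma sum_signChar_dotProduct [DecidableEq ι] (u : ι → ZMod 2) :
    ∑ x, signChar (u ⬝ᵥ x) = if u = 0 then 2 ^ Fintype.card ι else 0 := by
  let ψ : AddChar (ι → ZMod 2) ℤ :=
    signChar.compAddMonoidHom (dotProductBilin (ZMod 2) (ZMod 2) u).toAddMonoidHom
  have ψ_eq_zero_iff : ψ = 0 ↔ u = 0 := by
    refine ⟨fun h ↦ funext fun i ↦ signChar_eq_one_iff.mp ?_, fun h ↦ ?_⟩
    · simpa [ψ] using DFunLike.congr_fun h (Pi.single i 1)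
    · ext x
      simp [ψ, h]
  calc ∑ x, signChar (u ⬝ᵥ x) = if ψ = 0 then (Fintype.card (ι → ZMod 2) : ℤ) else 0 :=
        AddChar.sum_eq_ite ψ
    _ = if u = 0 then 2 ^ Fintype.card ι else 0 := by
        simp only [ψ_eq_zero_iff, Fintype.card_fun, ZMod.card, Nat.cast_pow, Nat.cast_ofNat]

theorem sum_sq_sum_signChar_dotProduct [DecidableEq ι] (S : Finset (ι → ZMod 2)) :
    ∑ u : ι → ZMod 2, (∑ x ∈ S, signChar (u ⬝ᵥ x)) ^ 2 = 2 ^ Fintype.card ι * #S := by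
  have sq_expand (u : ι → ZMod 2) : (∑ x ∈ S, signChar (u ⬝ᵥ x)) ^ 2 =
      ∑ x ∈ S, ∑ y ∈ S, signChar ((x + y) ⬝ᵥ u) := by
    simp only [sq, sum_mul_sum, ← AddChar.map_add_eq_mul, add_dotProduct, dotProduct_comm u]
  have orthogonality {x : ι → ZMod 2} (hx : x ∈ S) :
      ∑ y ∈ S, ∑ u, signChar ((x + y) ⬝ᵥ u) = 2 ^ Fintype.card ι := by
    simp only [sum_signChar_dotProduct, add_eq_zero_iff_eq_neg, ZModModule.neg_eq_self, sum_ite_eq,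
      hx, if_true]
  calc ∑ u : ι → ZMod 2, (∑ x ∈ S, signChar (u ⬝ᵥ x)) ^ 2
      = ∑ x ∈ S, ∑ y ∈ S, ∑ u, signChar ((x + y) ⬝ᵥ u) := by
        simp only [sq_expand]
        rw [sum_comm]
        exact sum_congr rfl fun x _ ↦ sum_comm
    _ = 2 ^ Fintype.card ι * #S := by
        rw [sum_congr rfl fun x ↦ orthogonality, sum_const, nsmul_eq_mul, mul_comm]

lemma sum_signChar_dotProduct_eq_sub (S : Finset (ι → ZMod 2)) (u : ι → ZMod 2) :
    ∑ x ∈ S, signChar (u ⬝ᵥ x) = #{x ∈ S | u ⬝ᵥ x = 0} - #{x ∈ S | u ⬝ᵥ x = 1} := by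
  simp only [signChar_eq_ite, sum_sub_distrib, sum_boole]

lemma card_filter_dotProduct_add (S : Finset (ι → ZMod 2)) (u : ι → ZMod 2) :
    #{x ∈ S | u ⬝ᵥ x = 0} + #{x ∈ S | u ⬝ᵥ x = 1} = #S := by
  simp only [← zmod_two_ne_zero_iff_eq_one, ne_eq, card_filter_add_card_filter_not]

/-- The vectors `u` whose linear form `x ↦ u ⬝ᵥ x` is constant on `S`, that is, the annihilator
of the direction of the affine span of `S`. -/
def directionAnnihilator [DecidableEq ι] (S : Finset (ι → ZMod 2)) : Finset (ι → ZMod 2) :=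
  {u | ∀ x ∈ S, ∀ y ∈ S, u ⬝ᵥ x = u ⬝ᵥ y}

variable [DecidableEq ι] {S : Finset (ι → ZMod 2)} {u : ι → ZMod 2}

lemma mem_directionAnnihilator :
    u ∈ directionAnnihilator S ↔ ∀ x ∈ S, ∀ y ∈ S, u ⬝ᵥ x = u ⬝ᵥ y := by
  simp [directionAnnihilator]

lemma zero_mem_directionAnnihilator : 0 ∈ directionAnnihilator S := by
  simp [mem_directionAnnihilator]

lemma sq_sum_signChar_of_mem_directionAnnihilator (hu : u ∈ directionAnnihilator S) :
    (∑ x ∈ S, signChar (u ⬝ᵥ x)) ^ 2 = (#S : ℤ) ^ 2 := by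
  obtain rfl | ⟨x₀, hx₀⟩ := S.eq_empty_or_nonempty
  · simp
  have sq_eq_one (a : ZMod 2) : signChar a ^ 2 = 1 := by decide +revert
  have sum_eq : ∑ x ∈ S, signChar (u ⬝ᵥ x) = #S * signChar (u ⬝ᵥ x₀) := by
    rw [sum_congr rfl fun x hx ↦ by rw [mem_directionAnnihilator.mp hu x hx x₀ hx₀], sum_const,
      nsmul_eq_mul]
  rw [sum_eq, mul_pow, sq_eq_one, mul_one]

lemma card_filter_dotProduct_ne_zero (hu : u ∉ directionAnnihilator S) (a : ZMod 2) :
    #{x ∈ S | u ⬝ᵥ x = a} ≠ 0 := by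
  have eq_of_ne_of_ne {p q : ZMod 2} (hp : p ≠ a) (hq : q ≠ a) : p = q := by decide +revert
  contrapose! hu
  rw [card_eq_zero, filter_eq_empty_iff] at hu
  exact mem_directionAnnihilator.mpr fun x hx y hy ↦ eq_of_ne_of_ne (hu hx) (hu hy)

end Fourier

section MinimumWeight

variable {n r : ℕ} {c : (Fin n → ZMod 2) → ZMod 2}

/-- The support of a binary word, as a finset; its cardinality is by definition `wt c`. -/
def codeSupport (c : (Fin n → ZMod 2) → ZMod 2) : Finset (Fin n → ZMod 2) :=
  {x | c x = 1}

lemma mem_codeSupport {x : Fin n → ZMod 2} : x ∈ codeSupport c ↔ c x = 1 := by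
  simp [codeSupport]

lemma card_codeSupport : #(codeSupport c) = wt c := rfl

lemma wt_ne_zero_of_two_pow_mul_wt_eq (hw : 2 ^ r * wt c = 2 ^ n) : wt c ≠ 0 :=
  right_ne_zero_of_mul (hw.trans_ne (pow_ne_zero n two_ne_zero))

lemma card_filter_dotProduct_eq_zero_or_wt_le (hc : c ∈ RMcode r n) (hw : 2 ^ r * wt c = 2 ^ n)
    (u : Fin n → ZMod 2) (a : ZMod 2) :
    #{x ∈ codeSupport c | u ⬝ᵥ x = a} = 0 ∨ wt c ≤ 2 * #{x ∈ codeSupport c | u ⬝ᵥ x = a} := by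
  -- Cutting by a hyperplane multiplies `c` by a word of degree one.
  let g : (Fin n → ZMod 2) → ZMod 2 := c * fun x ↦ u ⬝ᵥ x + (a + 1)
  have wt_g : wt g = #{x ∈ codeSupport c | u ⬝ᵥ x = a} := by
    have eq_one_iff (p q a : ZMod 2) : p * (q + (a + 1)) = 1 ↔ p = 1 ∧ q = a := by decide +revert
    simp only [wt, g, codeSupport, filter_filter, Pi.mul_apply, eq_one_iff]
  have hg : g ∈ RMcode (r + 1) n := mul_mem_RMcode hc (dotProduct_add_const_mem_RMcode u (a + 1))
  rw [← wt_g]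
  by_cases hg0 : g = 0
  · left
    rw [wt_eq_hammingNorm, hg0, hammingNorm_zero]
  · right
    refine Nat.le_of_mul_le_mul_left (c := 2 ^ r) ?_ (by positivity)
    calc 2 ^ r * wt c = 2 ^ n := hw
      _ ≤ 2 ^ (r + 1) * wt g := two_pow_le_two_pow_mul_wt_of_mem_RMcode hg hg0
      _ = 2 ^ r * (2 * wt g) := by ring

lemma sum_signChar_codeSupport_eq_zero (hc : c ∈ RMcode r n) (hw : 2 ^ r * wt c = 2 ^ n)
    {u : Fin n → ZMod 2} (hu : u ∉ directionAnnihilator (codeSupport c)) :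
    ∑ x ∈ codeSupport c, signChar (u ⬝ᵥ x) = 0 := by
  have half_le (a : ZMod 2) : wt c ≤ 2 * #{x ∈ codeSupport c | u ⬝ᵥ x = a} :=
    (card_filter_dotProduct_eq_zero_or_wt_le hc hw u a).resolve_left
      (card_filter_dotProduct_ne_zero hu a)
  have halves := card_filter_dotProduct_add (codeSupport c) u
  have le_zero := half_le 0
  have le_one := half_le 1
  rw [card_codeSupport] at halves
  rw [sum_signChar_dotProduct_eq_sub]
  omega

theorem card_directionAnnihilator_codeSupport (hc : c ∈ RMcode r n) (hw : 2 ^ r * wt c = 2 ^ n) :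
    #(directionAnnihilator (codeSupport c)) = 2 ^ r := by
  have wt_ne_zero : (wt c : ℤ) ≠ 0 := Nat.cast_ne_zero.mpr (wt_ne_zero_of_two_pow_mul_wt_eq hw)
  have sq_sum (u : Fin n → ZMod 2) : (∑ x ∈ codeSupport c, signChar (u ⬝ᵥ x)) ^ 2 =
      if u ∈ directionAnnihilator (codeSupport c) then (wt c : ℤ) ^ 2 else 0 := by
    split_ifs with hu
    · exact sq_sum_signChar_of_mem_directionAnnihilator hu
    · rw [sum_signChar_codeSupport_eq_zero hc hw hu, sq, mul_zero]
  have parseval := sum_sq_sum_signChar_dotProduct (codeSupport c)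
  simp only [sq_sum, sum_ite_mem, univ_inter, sum_const, nsmul_eq_mul, Fintype.card_fin,
    card_codeSupport] at parseval
  have card_mul : (#(directionAnnihilator (codeSupport c)) : ℤ) * wt c ^ 2 = 2 ^ r * wt c ^ 2 := by
    rw [parseval, ← Nat.cast_ofNat, ← Nat.cast_pow, ← hw]
    push_cast
    ring
  exact_mod_cast mul_right_cancel₀ (pow_ne_zero 2 wt_ne_zero) card_mul

end MinimumWeight


section MatrixRank

variable {K κ ι : Type*} [Field K] [Fintype κ] [Fintype ι]

lemma rank_eq_card_iff_linearIndependent_row {A : Matrix κ ι K} :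
    A.rank = Fintype.card κ ↔ LinearIndependent K A.row := by
  rw [linearIndependent_iff_card_eq_finrank_span, rank_eq_finrank_span_row, eq_comm]
  rfl

lemma mulVec_surjective_of_rank_eq_card {A : Matrix κ ι K} (hA : A.rank = Fintype.card κ) :
    Function.Surjective A.mulVec := by
  have range_eq_top : LinearMap.range A.mulVecLin = ⊤ :=
    Submodule.eq_top_of_finrank_eq (hA.trans (Module.finrank_fintype_fun_eq_card K).symm)
  exact LinearMap.range_eq_top.mp range_eq_top

lemma card_pow_mul_card_mulVec_eq [Fintype K] [DecidableEq K] [DecidableEq ι] {A : Matrix κ ι K}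
    (hA : A.rank = Fintype.card κ) (b : κ → K) :
    Fintype.card K ^ Fintype.card κ * #{x | A *ᵥ x = b} = Fintype.card K ^ Fintype.card ι := by
  classical
  have surj := mulVec_surjective_of_rank_eq_card hA
  have fibre_card (b' : κ → K) : #{x | A *ᵥ x = b'} = #{x | A *ᵥ x = b} :=
    AddMonoidHom.card_fiber_eq_of_mem_range A.mulVecLin (surj b') (surj b)
  calc Fintype.card K ^ Fintype.card κ * #{x | A *ᵥ x = b}
      = ∑ b', #{x | A *ᵥ x = b'} := by
        simp only [fibre_card, sum_const, card_univ, Fintype.card_fun, smul_eq_mul]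
    _ = Fintype.card K ^ Fintype.card ι := by
        rw [← card_eq_sum_card_fiberwise fun _ _ ↦ mem_univ _, card_univ, Fintype.card_fun]

lemma rank_eq_two_iff_linearIndependent {A : Matrix (Fin 2) ι K} :
    A.rank = 2 ↔ LinearIndependent K ![A 0, A 1] := by
  have row_eq : A.row = ![A 0, A 1] := by
    ext k
    fin_cases k <;> rfl
  rw [← row_eq, ← rank_eq_card_iff_linearIndependent_row, Fintype.card_fin]

lemma rank_eq_two_iff_exists_minor_ne_zero {A : Matrix (Fin 2) ι K} :
    A.rank = 2 ↔ ∃ i j, A 0 i * A 1 j - A 0 j * A 1 i ≠ 0 := by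
  rw [rank_eq_two_iff_linearIndependent]
  constructor
  · contrapose!
    intro minors_eq_zero hA
    obtain ⟨i, hi⟩ := Function.ne_iff.mp (hA.ne_zero 0)
    have relation : A 1 i • A 0 + -A 0 i • A 1 = 0 := by
      ext j
      simp only [Pi.add_apply, Pi.smul_apply, smul_eq_mul, Pi.zero_apply]
      linear_combination -minors_eq_zero i j
    exact hi (neg_eq_zero.mp (LinearIndependent.pair_iff.mp hA _ _ relation).2)
  · rintro ⟨i, j, minor_ne_zero⟩
    refine LinearIndependent.pair_iff.mpr fun s t relation ↦ ?_
    have at_i : s * A 0 i + t * A 1 i = 0 := congrFun relation i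
    have at_j : s * A 0 j + t * A 1 j = 0 := congrFun relation j
    constructor
    · refine (mul_eq_zero.mp ?_).resolve_right minor_ne_zero
      linear_combination A 1 j * at_i - A 1 i * at_j
    · refine (mul_eq_zero.mp ?_).resolve_right minor_ne_zero
      linear_combination A 0 i * at_j - A 0 j * at_i

lemma rank_le_one_iff_forall_minor_eq_zero {A : Matrix (Fin 2) ι K} :
    A.rank ≤ 1 ↔ ∀ i j, A 0 i * A 1 j - A 0 j * A 1 i = 0 := by
  have rank_le_two : A.rank ≤ 2 := by simpa only [Fintype.card_fin] using A.rank_le_card_height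
  have rank_le_one_iff_ne_two : A.rank ≤ 1 ↔ A.rank ≠ 2 := by omega
  rw [rank_le_one_iff_ne_two, ne_eq, rank_eq_two_iff_exists_minor_ne_zero]
  simp only [not_exists, not_not]

lemma rank_eq_two_iff_ne {A : Matrix (Fin 2) ι (ZMod 2)} :
    A.rank = 2 ↔ A 0 ≠ 0 ∧ A 1 ≠ 0 ∧ A 0 ≠ A 1 := by
  rw [rank_eq_two_iff_linearIndependent]
  constructor
  · exact fun hA ↦ ⟨hA.ne_zero 0, hA.ne_zero 1, fun h ↦ zero_ne_one (hA.injective h)⟩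
  · rintro ⟨h0, h1, hne⟩
    refine (LinearIndependent.pair_iff' h0).mpr fun a ↦ ?_
    obtain rfl | rfl := zmod_two_eq_zero_or_eq_one a
    · rwa [zero_smul, ne_comm]
    · rwa [one_smul]

lemma card_rank_eq_two_rows_mem [DecidableEq ι] {U : Finset (ι → ZMod 2)} (hU : 0 ∈ U) :
    #{A : Matrix (Fin 2) ι (ZMod 2) | A.rank = 2 ∧ ∀ k, A.row k ∈ U} = (#U - 1) * (#U - 2) := by
  have rows_equiv : #{A : Matrix (Fin 2) ι (ZMod 2) | A.rank = 2 ∧ ∀ k, A.row k ∈ U} =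
      #(U.erase 0).offDiag := by
    refine card_equiv (of.symm.trans (finTwoArrowEquiv (ι → ZMod 2))) fun A ↦ ?_
    simp only [mem_filter, mem_univ, true_and, rank_eq_two_iff_ne, Fin.forall_fin_two,
      mem_offDiag, mem_erase, Equiv.trans_apply, finTwoArrowEquiv_apply, row]
    tauto
  rw [rows_equiv, offDiag_card, card_erase_of_mem hU, ← Nat.mul_sub_one, Nat.sub_sub]

end MatrixRank

section Flat

variable {n : ℕ} {κ : Type*} [Fintype κ] {A : Matrix κ (Fin n) (ZMod 2)}
  {c : (Fin n → ZMod 2) → ZMod 2}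

/-- The indicator of the flat `{x | A *ᵥ x = b}`, written as the product of its defining
equations. -/
def flatIndicator (A : Matrix κ (Fin n) (ZMod 2)) (b : κ → ZMod 2) :
    (Fin n → ZMod 2) → ZMod 2 :=
  fun x ↦ ∏ k, ((A *ᵥ x) k + (b k + 1))

lemma flatIndicator_apply_eq_one_iff {b : κ → ZMod 2} {x : Fin n → ZMod 2} :
    flatIndicator A b x = 1 ↔ A *ᵥ x = b := by
  have add_ne_zero_iff (a b : ZMod 2) : a + (b + 1) ≠ 0 ↔ a = b := by decide +revert
  simp only [flatIndicator, ← zmod_two_ne_zero_iff_eq_one, prod_ne_zero_iff, mem_univ,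
    true_imp_iff, add_ne_zero_iff, funext_iff]

lemma flatIndicator_mem_RMcode (A : Matrix κ (Fin n) (ZMod 2)) (b : κ → ZMod 2) :
    flatIndicator A b ∈ RMcode (Fintype.card κ) n := by
  have eq_prod : flatIndicator A b = ∏ k, fun x ↦ A k ⬝ᵥ x + (b k + 1) := by
    ext x
    rw [Finset.prod_apply]
    rfl
  rw [eq_prod]
  exact prod_mem_RMcode fun k _ ↦ dotProduct_add_const_mem_RMcode (A k) (b k + 1)

lemma two_pow_mul_wt_flatIndicator (hA : A.rank = Fintype.card κ) (b : κ → ZMod 2) :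
    2 ^ Fintype.card κ * wt (flatIndicator A b) = 2 ^ n := by
  simpa only [wt, flatIndicator_apply_eq_one_iff, ZMod.card, Fintype.card_fin]
    using card_pow_mul_card_mulVec_eq hA b

lemma flatIndicator_injective (hA : A.rank = Fintype.card κ) :
    Function.Injective (flatIndicator A) := by
  intro b b' h
  obtain ⟨x, rfl⟩ := mulVec_surjective_of_rank_eq_card hA b
  rw [← flatIndicator_apply_eq_one_iff, ← h, flatIndicator_apply_eq_one_iff]

lemma exists_flatIndicator_eq_iff (hA : A.rank = Fintype.card κ)
    (hw : 2 ^ Fintype.card κ * wt c = 2 ^ n) :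
    (∃ b, flatIndicator A b = c) ↔ ∀ k, A.row k ∈ directionAnnihilator (codeSupport c) := by
  simp only [mem_directionAnnihilator, mem_codeSupport]
  constructor
  · rintro ⟨b, rfl⟩ k x hx y hy
    rw [flatIndicator_apply_eq_one_iff] at hx hy
    exact congrFun (hx.trans hy.symm) k
  · intro rows_const
    have support_nonempty : (codeSupport c).Nonempty := by
      rw [← card_ne_zero, card_codeSupport]
      exact wt_ne_zero_of_two_pow_mul_wt_eq hw
    obtain ⟨x₀, hx₀⟩ := support_nonempty
    have support_subset : codeSupport c ⊆ codeSupport (flatIndicator A (A *ᵥ x₀)) := by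
      intro x hx
      rw [mem_codeSupport, flatIndicator_apply_eq_one_iff]
      exact funext fun k ↦ rows_const k x (mem_codeSupport.mp hx) x₀ (mem_codeSupport.mp hx₀)
    have card_eq : wt (flatIndicator A (A *ᵥ x₀)) = wt c :=
      Nat.eq_of_mul_eq_mul_left (by positivity) ((two_pow_mul_wt_flatIndicator hA _).trans hw.symm)
    have support_eq := eq_of_subset_of_card_le support_subset card_eq.le
    refine ⟨A *ᵥ x₀, funext fun x ↦ zmod_two_eq_iff_eq_one_iff.mpr ?_⟩
    rw [← mem_codeSupport, ← mem_codeSupport, support_eq]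

end Flat

section PartitionCode

variable {n : ℕ} {κ : Type*} {β : Fin n → κ} {c : (Fin n → ZMod 2) → ZMod 2}

/-- The subcode of `RM(2, n)` spanned by the monomials of degree at most two meeting every block
of a partition in at most one variable; the blocks of the partition are the fibres of `β`. -/
def partitionCode (β : Fin n → κ) : Submodule (ZMod 2) ((Fin n → ZMod 2) → ZMod 2) :=
  Submodule.span (ZMod 2) {c | ∃ S : Finset (Fin n), #S ≤ 2 ∧ Set.InjOn β S ∧ c = mon S}

lemma Ccode_eq_partitionCode (m m' : ℕ) :
    Ccode m m' = partitionCode fun i : Fin (m * m') ↦ (i : ℕ) / m' := by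
  have injOn_iff (S : Finset (Fin (m * m'))) :
      (∀ b : ℕ, #(S.filter fun i : Fin (m * m') ↦ (i : ℕ) / m' = b) ≤ 1) ↔
        Set.InjOn (fun i : Fin (m * m') ↦ (i : ℕ) / m') S := by
    simp only [card_le_one, mem_filter, Set.InjOn, mem_coe]
    exact ⟨fun h i hi j hj hij ↦ h _ i ⟨hi, hij⟩ j ⟨hj, rfl⟩,
      fun h b i hi j hj ↦ h hi.1 hj.1 (hi.2.trans hj.2.symm)⟩
  simp only [Ccode, partitionCode, injOn_iff]

lemma partitionCode_le_RMcode : partitionCode β ≤ RMcode 2 n :=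
  Submodule.span_mono fun _ ⟨S, hS, _, hc⟩ ↦ ⟨S, hS, hc⟩

theorem mem_partitionCode_iff :
    c ∈ partitionCode β ↔ c ∈ RMcode 2 n ∧ ∀ i j, i ≠ j → β i = β j →
      Δ_[Pi.single i 1] (Δ_[Pi.single j 1] c) = 0 := by
  constructor
  · refine fun hc ↦ ⟨partitionCode_le_RMcode hc, fun i j hij hβ ↦ ?_⟩
    induction hc using Submodule.span_induction with
    | mem _ hmon =>
      obtain ⟨S, -, hinj, rfl⟩ := hmon
      rw [fwdDiff_single_fwdDiff_single_mon hij, if_neg]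
      exact fun ⟨hi, hj⟩ ↦ hij (hinj hi hj hβ)
    | zero => rw [fwdDiff_zero, fwdDiff_zero]
    | add f g _ _ hf hg => rw [fwdDiff_add, fwdDiff_add, hf, hg, add_zero]
    | smul a f _ hf => rw [fwdDiff_const_smul, fwdDiff_const_smul, hf, smul_zero]
  · rintro ⟨hc, mixed_eq_zero⟩
    obtain ⟨a, rfl⟩ := exists_eq_sum_smul_mon hc
    refine sum_mem fun S hS ↦ ?_
    rw [mem_filter_univ] at hS
    by_cases hinj : Set.InjOn β S
    · exact Submodule.smul_mem _ _ (Submodule.subset_span ⟨S, hS, hinj, rfl⟩)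
    obtain ⟨i, hi, j, hj, hβ, hij⟩ : ∃ i ∈ S, ∃ j ∈ S, β i = β j ∧ i ≠ j := by
      simpa [Set.InjOn] using hinj
    have coeff_eq_zero : a {i, j} = 0 := by
      have := mixed_eq_zero i j hij hβ
      rw [fwdDiff_single_fwdDiff_single_sum hij] at this
      exact congrFun this 0
    rw [(mem_and_mem_iff_eq_pair hij hS).mp ⟨hi, hj⟩, coeff_eq_zero, zero_smul]
    exact zero_mem _

/-- The submatrix of `A` formed by the columns in the block `β ⁻¹' {k}`. -/
def columnBlock {α ι κ R : Type*} (A : Matrix α ι R) (β : ι → κ) (k : κ) :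
    Matrix α {i // β i = k} R :=
  A.submatrix id Subtype.val

lemma fwdDiff_single_fwdDiff_single_flatIndicator (A : Matrix (Fin 2) (Fin n) (ZMod 2))
    (b : Fin 2 → ZMod 2) (i j : Fin n) :
    Δ_[Pi.single i 1] (Δ_[Pi.single j 1] (flatIndicator A b)) =
      fun _ ↦ A 0 i * A 1 j - A 0 j * A 1 i := by
  ext x
  simp only [fwdDiff, flatIndicator, Fin.prod_univ_two, mulVec_add, mulVec_single_one,
    Pi.add_apply, col_apply, CharTwo.sub_eq_add (A 0 i * A 1 j)]
  ring

theorem flatIndicator_mem_partitionCode_iff [DecidableEq κ] {A : Matrix (Fin 2) (Fin n) (ZMod 2)}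
    {b : Fin 2 → ZMod 2} :
    flatIndicator A b ∈ partitionCode β ↔
      ∀ k, (columnBlock A β k).rank ≤ 1 := by
  have mem_RMcode : flatIndicator A b ∈ RMcode 2 n := flatIndicator_mem_RMcode A b
  simp only [mem_partitionCode_iff, mem_RMcode, true_and,
    fwdDiff_single_fwdDiff_single_flatIndicator, rank_le_one_iff_forall_minor_eq_zero,
    columnBlock, submatrix_apply, id_eq, Subtype.forall]
  constructor
  · rintro h k i rfl j hj
    by_cases hij : i = j
    · simp [hij]
    · exact congrFun (h i j hij hj.symm) 0
  · exact fun h i j _ hβ ↦ funext fun _ ↦ h _ i rfl j hβ.symm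

end PartitionCode

section Counting

variable {n : ℕ} {κ : Type*} [DecidableEq κ] {β : Fin n → κ}

open scoped Classical in
lemma card_codewords_eq_flatIndicator {A : Matrix (Fin 2) (Fin n) (ZMod 2)} (hA : A.rank = 2)
    (hblock : ∀ k, (columnBlock A β k).rank ≤ 1) :
    #{c | (c ∈ partitionCode β ∧ 2 ^ 2 * wt c = 2 ^ n) ∧ ∃ b, flatIndicator A b = c} = 4 := by
  have eq_image : ({c | (c ∈ partitionCode β ∧ 2 ^ 2 * wt c = 2 ^ n) ∧
      ∃ b, flatIndicator A b = c} : Finset _) = univ.image (flatIndicator A) := by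
    ext c
    rw [mem_filter_univ, mem_image_univ_iff_mem_range, Set.mem_range, and_iff_right_iff_imp]
    rintro ⟨b, rfl⟩
    exact ⟨flatIndicator_mem_partitionCode_iff.mpr hblock, two_pow_mul_wt_flatIndicator hA b⟩
  rw [eq_image, card_image_of_injective _ (flatIndicator_injective hA)]
  rfl

open scoped Classical in
lemma card_matrices_flatIndicator_eq {c : (Fin n → ZMod 2) → ZMod 2} (hc : c ∈ partitionCode β)
    (hw : 2 ^ 2 * wt c = 2 ^ n) :
    #{A : Matrix (Fin 2) (Fin n) (ZMod 2) | (A.rank = 2 ∧ ∀ k, (columnBlock A β k).rank ≤ 1) ∧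
      ∃ b, flatIndicator A b = c} = 6 := by
  have rows_mem_iff (A : Matrix (Fin 2) (Fin n) (ZMod 2)) :
      ((A.rank = 2 ∧ ∀ k, (columnBlock A β k).rank ≤ 1) ∧ ∃ b, flatIndicator A b = c) ↔
        A.rank = 2 ∧ ∀ k, A.row k ∈ directionAnnihilator (codeSupport c) := by
    rw [and_assoc, and_congr_right_iff]
    intro hA
    rw [← exists_flatIndicator_eq_iff hA hw, and_iff_right_iff_imp]
    rintro ⟨b, rfl⟩
    exact flatIndicator_mem_partitionCode_iff.mp hc
  have card_annihilator : #(directionAnnihilator (codeSupport c)) = 4 :=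
    card_directionAnnihilator_codeSupport (partitionCode_le_RMcode hc) hw
  simp only [rows_mem_iff]
  convert card_rank_eq_two_rows_mem (zero_mem_directionAnnihilator (S := codeSupport c))
  rw [card_annihilator]

theorem stmt_7_general (β : Fin n → κ) (hn : 2 ≤ n) :
    3 * Nat.card {c : (Fin n → ZMod 2) → ZMod 2 // c ∈ partitionCode β ∧ wt c = 2 ^ (n - 2)} =
    2 * Nat.card {A : Matrix (Fin 2) (Fin n) (ZMod 2) //
      A.rank = 2 ∧ ∀ k, (columnBlock A β k).rank ≤ 1} := by
  classical
  have wt_iff (c : (Fin n → ZMod 2) → ZMod 2) : wt c = 2 ^ (n - 2) ↔ 2 ^ 2 * wt c = 2 ^ n := by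
    rw [← pow_mul_pow_sub 2 hn, Nat.mul_right_inj (by norm_num)]
  simp only [wt_iff, Nat.card_eq_fintype_card, Fintype.card_subtype]
  have double_count := card_mul_eq_card_mul (m := 4) (n := 6)
    (s := {A : Matrix (Fin 2) (Fin n) (ZMod 2) | A.rank = 2 ∧ ∀ k, (columnBlock A β k).rank ≤ 1})
    (t := {c | c ∈ partitionCode β ∧ 2 ^ 2 * wt c = 2 ^ n})
    (fun A c ↦ ∃ b, flatIndicator A b = c)
    (fun A hA ↦ by
      rw [mem_filter_univ] at hA
      rw [bipartiteAbove, filter_filter]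
      exact card_codewords_eq_flatIndicator hA.1 hA.2)
    (fun c hc ↦ by
      rw [mem_filter_univ] at hc
      rw [bipartiteBelow, filter_filter]
      convert card_matrices_flatIndicator_eq hc.1 hc.2)
  omega

lemma forall_lt_rank_blockMat_le_one_iff {m m' : ℕ} {A : Matrix (Fin 2) (Fin (m * m')) (ZMod 2)} :
    (∀ b < m, (blockMat m m' A b).rank ≤ 1) ↔ ∀ b, (blockMat m m' A b).rank ≤ 1 := by
  refine ⟨fun h b ↦ ?_, fun h b _ ↦ h b⟩
  rw [rank_le_one_iff_forall_minor_eq_zero]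
  intro i j
  have hb : b < m := i.2 ▸ Nat.div_lt_of_lt_mul (i.1.2.trans_eq (mul_comm m m'))
  exact rank_le_one_iff_forall_minor_eq_zero.mp (h b hb) i j

end Counting

/-- `3·|{c ∈ C : wt(c) = 2^{n−2}}| = 2·|{A : rank(A) = 2, rank(A_i) ≤ 1 ∀i}|`. -/
theorem stmt_7 (m m' : ℕ) (hm : 2 ≤ m) (hm' : 2 ≤ m') :
    3 * Nat.card {c : (Fin (m * m') → ZMod 2) → ZMod 2 //
        c ∈ Ccode m m' ∧ wt c = 2 ^ (m * m' - 2)} =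
    2 * Nat.card {A : Matrix (Fin 2) (Fin (m * m')) (ZMod 2) //
        A.rank = 2 ∧ ∀ b : ℕ, b < m → (blockMat m m' A b).rank ≤ 1} := by
  simp only [forall_lt_rank_blockMat_le_one_iff, Ccode_eq_partitionCode]
  exact stmt_7_general _ (hm.trans (Nat.le_mul_of_pos_right m (by omega)))
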